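/- arXiv:1208.1981 — 12 statements merged into one kernel-verified Lean document; each statement's English description precedes it below -/
import Mathlib

section
/- (Theorem 1(i), postulate FD2.) If the d-variate depth D^d is linear invariant, i.e. D^d(A y | A x¹, …, A xⁿ) = D^d(y | x¹, …, xⁿ) for every invertible linear map A : ℝ^d → ℝ^d, every y ∈ ℝ^d and every cloud (x¹, …, xⁿ) in ℝ^d, then the Φ-depth is scale invariant: D(λ z | λ x¹, …, λ xⁿ) = D(z | x¹, …, xⁿ) for every z ∈ E and every real λ > 0. -/
/-- Theorem 1(i), postulate FD2: if the d-variate depth is linear invariant,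
then the Φ-depth is scale invariant. -/
theorem phi_depth_FD2
    {E : Type*} [NormedAddCommGroup E] [NormedSpace ℝ E]
    {n d : ℕ} (hn : 0 < n) (hd : 0 < d)
    (Dd : (Fin d → ℝ) → (Fin n → (Fin d → ℝ)) → ℝ)
    (hDd01 : ∀ y Y, Dd y Y ∈ Set.Icc (0 : ℝ) 1)
    (Φ : Set (E →L[ℝ] (Fin d → ℝ))) (hΦ : Φ.Nonempty)
    (D : E → (Fin n → E) → ℝ)
    (hD : ∀ z X, D z X = sInf {v : ℝ | ∃ φ ∈ Φ, v = Dd (φ z) (fun i => φ (X i))})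
    (hlin : ∀ (A : (Fin d → ℝ) ≃ₗ[ℝ] (Fin d → ℝ)) (y : Fin d → ℝ)
      (Y : Fin n → (Fin d → ℝ)), Dd (A y) (fun i => A (Y i)) = Dd y Y)
    (X : Fin n → E) (z : E) (l : ℝ) (hl : 0 < l) :
    D (l • z) (fun i => l • X i) = D z X := by
  have key : ∀ φ : E →L[ℝ] (Fin d → ℝ),
      Dd (φ (l • z)) (fun i => φ (l • X i)) = Dd (φ z) (fun i => φ (X i)) := by
    intro φ
    have h := hlin (LinearEquiv.smulOfNeZero ℝ (Fin d → ℝ) l hl.ne') (φ z) (fun i => φ (X i))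
    simpa only [map_smul, LinearEquiv.smulOfNeZero_apply] using h
  rw [hD, hD]
  simp only [key]
end

section
/- (Theorem 1(i), postulate FD4.) Suppose D^d is monotone on rays: whenever a point w ∈ ℝ^d satisfies D^d(w | Y) ≥ D^d(v | Y) for all v ∈ ℝ^d (w is a deepest point of the cloud Y), then for every direction r ∈ ℝ^d the map α ↦ D^d(w + α r | Y) is nonincreasing on (0, ∞). Let z* ∈ E be such that D^d(φ(z*) | φ(X)) = 1 for every φ ∈ Φ (so, since D^d ≤ 1, each φ(z*) is a deepest point of the cloud φ(X), and D(z* | X) = 1). Then for every r ∈ E the map α ↦ D(z* + α r | X) is nonincreasing on (0, ∞). -/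
/-- Theorem 1(i), postulate FD4: if the d-variate depth is monotone on rays,
then the Φ-depth is monotone on rays from a point of maximal depth. -/
theorem phi_depth_FD4
    {E : Type*} [NormedAddCommGroup E] [NormedSpace ℝ E]
    {n d : ℕ} (hn : 0 < n) (hd : 0 < d)
    (Dd : (Fin d → ℝ) → (Fin n → (Fin d → ℝ)) → ℝ)
    (hDd01 : ∀ y Y, Dd y Y ∈ Set.Icc (0 : ℝ) 1)
    (Φ : Set (E →L[ℝ] (Fin d → ℝ))) (hΦ : Φ.Nonempty)
    (D : E → (Fin n → E) → ℝ)
    (hD : ∀ z X, D z X = sInf {v : ℝ | ∃ φ ∈ Φ, v = Dd (φ z) (fun i => φ (X i))})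
    (hray : ∀ (Y : Fin n → (Fin d → ℝ)) (w : Fin d → ℝ),
      (∀ v, Dd v Y ≤ Dd w Y) →
      ∀ r : Fin d → ℝ, AntitoneOn (fun α : ℝ => Dd (w + α • r) Y) (Set.Ioi 0))
    (X : Fin n → E) (zstar : E)
    (hzstar : ∀ φ ∈ Φ, Dd (φ zstar) (fun i => φ (X i)) = 1)
    (r : E) :
    AntitoneOn (fun α : ℝ => D (zstar + α • r) X) (Set.Ioi 0) := by
  intro a ha b hb hab
  simp only [hD]
  obtain ⟨φ₀, h₀⟩ := hΦ
  refine le_csInf ⟨_, φ₀, h₀, rfl⟩ ?_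
  rintro v ⟨φ, hφ, rfl⟩
  have hmax : ∀ v, Dd v (fun i => φ (X i)) ≤ Dd (φ zstar) (fun i => φ (X i)) := by
    intro v
    rw [hzstar φ hφ]
    exact (hDd01 _ _).2
  have key := hray (fun i => φ (X i)) (φ zstar) hmax (φ r) ha hb hab
  refine le_trans (csInf_le ⟨0, ?_⟩ ⟨φ, hφ, rfl⟩) ?_
  · rintro v ⟨ψ, _, rfl⟩
    exact (hDd01 _ _).1
  · simpa only [map_add, map_smul] using key
end

section
/- (Theorem 1(ii), sufficiency for postulate FD3.) Suppose D^d is null at infinity: for every cloud Y in ℝ^d and every sequence (y_i) in ℝ^d with ‖y_i‖ → ∞ one has D^d(y_i | Y) → 0. Suppose moreover that for every sequence (z_i) in E with ‖z_i‖ → ∞ there exists φ ∈ Φ such that ‖φ(z_i)‖ → ∞. Then the Φ-depth is null at infinity: for every sequence (z_i) in E with ‖z_i‖ → ∞ one has D(z_i | X) → 0. -/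
open Filter

/-- Theorem 1(ii), sufficiency for postulate FD3: if the d-variate depth is null at
infinity and every sequence diverging in norm diverges under some φ ∈ Φ, then the
Φ-depth is null at infinity. -/
theorem phi_depth_FD3
    {E : Type*} [NormedAddCommGroup E] [NormedSpace ℝ E]
    {n d : ℕ} (hn : 0 < n) (hd : 0 < d)
    (Dd : (Fin d → ℝ) → (Fin n → (Fin d → ℝ)) → ℝ)
    (hDd01 : ∀ y Y, Dd y Y ∈ Set.Icc (0 : ℝ) 1)
    (Φ : Set (E →L[ℝ] (Fin d → ℝ))) (hΦ : Φ.Nonempty)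
    (D : E → (Fin n → E) → ℝ)
    (hD : ∀ z X, D z X = sInf {v : ℝ | ∃ φ ∈ Φ, v = Dd (φ z) (fun i => φ (X i))})
    (hnull : ∀ (Y : Fin n → (Fin d → ℝ)) (y : ℕ → (Fin d → ℝ)),
      Tendsto (fun i => ‖y i‖) atTop atTop →
      Tendsto (fun i => Dd (y i) Y) atTop (nhds 0))
    (hΦdiv : ∀ zs : ℕ → E, Tendsto (fun i => ‖zs i‖) atTop atTop →
      ∃ φ ∈ Φ, Tendsto (fun i => ‖φ (zs i)‖) atTop atTop)
    (X : Fin n → E) (zs : ℕ → E)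
    (hzs : Tendsto (fun i => ‖zs i‖) atTop atTop) :
    Tendsto (fun i => D (zs i) X) atTop (nhds 0) := by
  obtain ⟨φ, hφ, hdiv⟩ := hΦdiv zs hzs
  refine squeeze_zero (fun i => ?_) (fun i => ?_)
    (hnull (fun j => φ (X j)) (fun i => φ (zs i)) hdiv)
  · rw [hD]
    apply Real.sInf_nonneg
    rintro v ⟨ψ, _, rfl⟩
    exact (hDd01 _ _).1
  · rw [hD]
    refine csInf_le ⟨0, ?_⟩ ⟨φ, hφ, rfl⟩
    rintro v ⟨ψ, _, rfl⟩
    exact (hDd01 _ _).1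
end

section
/- (Theorem 1(iii), postulate FD4con.) Suppose D^d is quasiconcave, i.e. for every cloud Y in ℝ^d and every α > 0 the upper level set {y ∈ ℝ^d : D^d(y | Y) ≥ α} is convex. Then the Φ-depth is quasiconcave: for every α > 0 the upper level set D_α(X) = {z ∈ E : D(z | X) ≥ α} is a convex subset of E; equivalently, D(λ y + (1 − λ) z | X) ≥ min(D(y | X), D(z | X)) for all y, z ∈ E and λ ∈ [0,1]. -/
/-- Theorem 1(iii), postulate FD4con: if the d-variate depth is quasiconcave,
then the Φ-depth is quasiconcave. -/
theorem phi_depth_FD4con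
    {E : Type*} [NormedAddCommGroup E] [NormedSpace ℝ E]
    {n d : ℕ} (hn : 0 < n) (hd : 0 < d)
    (Dd : (Fin d → ℝ) → (Fin n → (Fin d → ℝ)) → ℝ)
    (hDd01 : ∀ y Y, Dd y Y ∈ Set.Icc (0 : ℝ) 1)
    (Φ : Set (E →L[ℝ] (Fin d → ℝ))) (hΦ : Φ.Nonempty)
    (D : E → (Fin n → E) → ℝ)
    (hD : ∀ z X, D z X = sInf {v : ℝ | ∃ φ ∈ Φ, v = Dd (φ z) (fun i => φ (X i))})
    (hqc : ∀ (Y : Fin n → (Fin d → ℝ)) (α : ℝ), 0 < α →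
      Convex ℝ {y : Fin d → ℝ | α ≤ Dd y Y})
    (X : Fin n → E) :
    (∀ α : ℝ, 0 < α → Convex ℝ {z : E | α ≤ D z X}) ∧
      (∀ y z : E, ∀ l ∈ Set.Icc (0 : ℝ) 1,
        min (D y X) (D z X) ≤ D (l • y + (1 - l) • z) X) := by
  have key : ∀ z α, α ≤ D z X ↔ ∀ φ ∈ Φ, α ≤ Dd (φ z) (fun i => φ (X i)) := by
    intro z α
    rw [hD]
    constructor
    · intro h φ hφ
      refine h.trans (csInf_le ⟨0, ?_⟩ ⟨φ, hφ, rfl⟩)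
      rintro v ⟨ψ, _, rfl⟩
      exact (hDd01 _ _).1
    · intro h
      obtain ⟨φ, hφ⟩ := hΦ
      refine le_csInf ⟨_, φ, hφ, rfl⟩ ?_
      rintro v ⟨ψ, hψ, rfl⟩
      exact h ψ hψ
  have hconv : ∀ α : ℝ, 0 < α → Convex ℝ {z : E | α ≤ D z X} := by
    intro α hα y hy z hz a b ha hb hab
    simp only [Set.mem_setOf_eq] at hy hz ⊢
    rw [key] at hy hz ⊢
    intro φ hφ
    have := hqc (fun i => φ (X i)) α hα (hy φ hφ) (hz φ hφ) ha hb hab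
    simpa only [map_add, map_smul, Set.mem_setOf_eq] using this
  refine ⟨hconv, ?_⟩
  intro y z l hl
  rcases le_or_gt (min (D y X) (D z X)) 0 with h | h
  · exact h.trans ((key _ _).2 fun φ _ => (hDd01 _ _).1)
  · exact hconv _ h (min_le_left (D y X) (D z X)) (min_le_right (D y X) (D z X))
      hl.1 (sub_nonneg.2 hl.2) (by ring)
end

section
/- (Proposition: postulate FD4pw for univariate Φ-depths with increasing functionals.) Let d = 1 and let E additionally carry a partial order compatible with its vector space structure (for instance, a space of real functions with the pointwise order). Suppose every φ ∈ Φ is increasing: x ≤ y implies φ(x) ≤ φ(y). Suppose D¹ is monotone on rays in the univariate form: if ζ* is a deepest point of a univariate cloud ξ (D¹(ζ* | ξ) ≥ D¹(v | ξ) for all v ∈ ℝ), then ζ* ≤ a ≤ b or b ≤ a ≤ ζ* implies D¹(a | ξ) ≥ D¹(b | ξ). If z* ∈ E satisfies D(z* | X) = 1, then for all y, z ∈ E with z* ≤ y ≤ z or z ≤ y ≤ z* it holds that D(y | X) ≥ D(z | X). -/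
/-- Postulate FD4pw for univariate Φ-depths with increasing functionals. -/
theorem phi_depth_FD4pw
    {E : Type*} [NormedAddCommGroup E] [NormedSpace ℝ E] [PartialOrder E]
    [CovariantClass E E (· + ·) (· ≤ ·)]
    {n : ℕ} (hn : 0 < n)
    (D1 : ℝ → (Fin n → ℝ) → ℝ)
    (hD101 : ∀ ζ ξ, D1 ζ ξ ∈ Set.Icc (0 : ℝ) 1)
    (Φ : Set (E →L[ℝ] ℝ)) (hΦ : Φ.Nonempty)
    (hmono : ∀ φ ∈ Φ, Monotone φ)
    (hray : ∀ (ξ : Fin n → ℝ) (ζ : ℝ), (∀ v, D1 v ξ ≤ D1 ζ ξ) →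
      ∀ a b : ℝ, (ζ ≤ a ∧ a ≤ b) ∨ (b ≤ a ∧ a ≤ ζ) → D1 b ξ ≤ D1 a ξ)
    (D : E → (Fin n → E) → ℝ)
    (hD : ∀ z X, D z X = sInf {v : ℝ | ∃ φ ∈ Φ, v = D1 (φ z) (fun i => φ (X i))})
    (X : Fin n → E) (zstar : E) (hzstar : D zstar X = 1)
    (y z : E) (hyz : (zstar ≤ y ∧ y ≤ z) ∨ (z ≤ y ∧ y ≤ zstar)) :
    D z X ≤ D y X := by
  have hbdd : ∀ w : E, BddBelow {v : ℝ | ∃ φ ∈ Φ, v = D1 (φ w) (fun i => φ (X i))} := by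
    intro w
    refine ⟨0, ?_⟩
    rintro v ⟨φ, _, rfl⟩
    exact (hD101 _ _).1
  rw [hD z X, hD y X]
  obtain ⟨φ₀, hφ₀⟩ := hΦ
  refine le_csInf ⟨_, φ₀, hφ₀, rfl⟩ ?_
  rintro v ⟨φ, hφ, rfl⟩
  refine (csInf_le (hbdd z) ⟨φ, hφ, rfl⟩).trans ?_
  have h1 : 1 ≤ D1 (φ zstar) (fun i => φ (X i)) := by
    rw [← hzstar, hD zstar X]
    exact csInf_le (hbdd zstar) ⟨φ, hφ, rfl⟩
  refine hray _ (φ zstar) (fun v => (hD101 _ _).2.trans h1) _ _ ?_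
  rcases hyz with ⟨h, h'⟩ | ⟨h, h'⟩
  · exact Or.inl ⟨hmono φ hφ h, hmono φ hφ h'⟩
  · exact Or.inr ⟨hmono φ hφ h, hmono φ hφ h'⟩
end

section
/- (Theorem 3.) The Φ-depth has the surjection property — for every φ ∈ Φ and every y ∈ ℝ^d there exists z ∈ E with φ(z) = y and D(z | X) = D^d(y | φ(X)) — if and only if for every φ ∈ Φ and every α ∈ [0,1] the image of the level set equals the corresponding d-variate level set: φ(D_α(X)) = {y ∈ ℝ^d : D^d(y | φ(X)) ≥ α}. -/
/-- Theorem 3: the surjection property holds if and only if images of level sets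
coincide with the d-variate level sets of the projected data. -/
theorem phi_depth_surjection_property
    {E : Type*} [NormedAddCommGroup E] [NormedSpace ℝ E]
    {n d : ℕ} (hn : 0 < n) (hd : 0 < d)
    (Dd : (Fin d → ℝ) → (Fin n → (Fin d → ℝ)) → ℝ)
    (hDd01 : ∀ y Y, Dd y Y ∈ Set.Icc (0 : ℝ) 1)
    (Φ : Set (E →L[ℝ] (Fin d → ℝ))) (hΦ : Φ.Nonempty)
    (D : E → (Fin n → E) → ℝ)
    (hD : ∀ z X, D z X = sInf {v : ℝ | ∃ φ ∈ Φ, v = Dd (φ z) (fun i => φ (X i))})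
    (X : Fin n → E) :
    (∀ φ ∈ Φ, ∀ y : Fin d → ℝ,
        ∃ z : E, φ z = y ∧ D z X = Dd y (fun i => φ (X i))) ↔
      (∀ φ ∈ Φ, ∀ α ∈ Set.Icc (0 : ℝ) 1,
        ⇑φ '' {z : E | α ≤ D z X} =
          {y : Fin d → ℝ | α ≤ Dd y (fun i => φ (X i))}) := by
  have key : ∀ φ ∈ Φ, ∀ z : E, D z X ≤ Dd (φ z) (fun i => φ (X i)) := by
    intro φ hφ z
    rw [hD]
    refine csInf_le ⟨0, ?_⟩ ⟨φ, hφ, rfl⟩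
    rintro v ⟨ψ, _, rfl⟩
    exact (hDd01 _ _).1
  constructor
  · intro h φ hφ α _
    ext y
    constructor
    · rintro ⟨z, hz, rfl⟩
      exact le_trans hz (key φ hφ z)
    · intro hy
      obtain ⟨z, hz, hzD⟩ := h φ hφ y
      refine ⟨z, ?_, hz⟩
      rw [Set.mem_setOf_eq, hzD]
      exact hy
  · intro h φ hφ y
    have hy : y ∈ ⇑φ '' {z : E | Dd y (fun i => φ (X i)) ≤ D z X} := by
      rw [h φ hφ _ (hDd01 _ _)]
      exact le_refl (Dd y (fun i => φ (X i)))
    obtain ⟨z, hz, hzy⟩ := hy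
    refine ⟨z, hzy, le_antisymm ?_ hz⟩
    have := key φ hφ z
    rwa [hzy] at this
end

section
/- (Proposition on symmetry, postulate FD4center.) Call a cloud (y¹, …, yⁿ) in ℝ^d centrally symmetric about c ∈ ℝ^d if there is a permutation σ of {1, …, n} with y^{σ(i)} = 2c − y^i for all i, and similarly for clouds in E. Suppose D^d is maximal at centers of central symmetry: for every cloud Y in ℝ^d centrally symmetric about c and every v ∈ ℝ^d, D^d(c | Y) ≥ D^d(v | Y). If the data cloud X = (x¹, …, xⁿ) in E is centrally symmetric about some z^c ∈ E and there exists z* ∈ E with D(z* | X) = 1, then D(z^c | X) = 1; in particular the Φ-depth attains its maximum at z^c. -/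
/-- FD4center: if the d-variate depth is maximal at centers of central symmetry,
the data cloud is centrally symmetric about z^c, and some point has Φ-depth 1,
then the Φ-depth is maximal (equal to 1) at z^c. -/
theorem phi_depth_FD4center
    {E : Type*} [NormedAddCommGroup E] [NormedSpace ℝ E]
    {n d : ℕ} (hn : 0 < n) (hd : 0 < d)
    (Dd : (Fin d → ℝ) → (Fin n → (Fin d → ℝ)) → ℝ)
    (hDd01 : ∀ y Y, Dd y Y ∈ Set.Icc (0 : ℝ) 1)
    (Φ : Set (E →L[ℝ] (Fin d → ℝ))) (hΦ : Φ.Nonempty)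
    (D : E → (Fin n → E) → ℝ)
    (hD : ∀ z X, D z X = sInf {v : ℝ | ∃ φ ∈ Φ, v = Dd (φ z) (fun i => φ (X i))})
    (hsym : ∀ (Y : Fin n → (Fin d → ℝ)) (c : Fin d → ℝ),
      (∃ σ : Equiv.Perm (Fin n), ∀ i, Y (σ i) = (2 : ℝ) • c - Y i) →
      ∀ v, Dd v Y ≤ Dd c Y)
    (X : Fin n → E) (zc : E)
    (hX : ∃ σ : Equiv.Perm (Fin n), ∀ i, X (σ i) = (2 : ℝ) • zc - X i)
    (hex : ∃ zstar : E, D zstar X = 1) :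
    D zc X = 1 := by
  obtain ⟨σ, hσ⟩ := hX
  obtain ⟨zs, hzs⟩ := hex
  obtain ⟨φ₀, hφ₀⟩ := hΦ
  rw [hD] at hzs ⊢
  apply le_antisymm
  · refine le_trans (csInf_le ⟨0, ?_⟩ ⟨φ₀, hφ₀, rfl⟩) (hDd01 _ _).2
    rintro v ⟨φ, _, rfl⟩
    exact (hDd01 _ _).1
  · refine le_csInf ⟨_, φ₀, hφ₀, rfl⟩ ?_
    rintro v ⟨φ, hφ, rfl⟩
    have h1 : (1 : ℝ) ≤ Dd (φ zs) (fun i => φ (X i)) := by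
      rw [← hzs]
      refine csInf_le ⟨0, ?_⟩ ⟨φ, hφ, rfl⟩
      rintro v ⟨ψ, _, rfl⟩
      exact (hDd01 _ _).1
    refine h1.trans (hsym _ _ ⟨σ, fun i => ?_⟩ _)
    simp only [hσ, map_sub, map_smul]
end

section
/- (Proposition 1, postulate FD2F for the graph depth.) Suppose D^d is linear invariant: D^d(A y | A x¹, …, A xⁿ) = D^d(y | x¹, …, xⁿ) for every invertible linear map A : ℝ^d → ℝ^d and every cloud in ℝ^d. Let a : J → ℝ^d be a function with a_j(t) ≠ 0 for every coordinate j ∈ {1, …, d} and every t ∈ T, and let a·z denote the componentwise (pointwise) product, (a·z)(t) = (a_1(t)z_1(t), …, a_d(t)z_d(t)). Then the graph depth is function-scale invariant: GD(a·z | a·x¹, …, a·xⁿ) = GD(z | x¹, …, xⁿ). -/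
/-- Proposition 1, postulate FD2F: the graph depth is function-scale invariant
whenever the underlying d-variate depth is linear invariant. -/
theorem graph_depth_FD2F
    {J : Type*} {n d : ℕ} (hn : 0 < n) (hd : 0 < d)
    (T : Set J) (hT : T.Nonempty)
    (Dd : (Fin d → ℝ) → (Fin n → (Fin d → ℝ)) → ℝ)
    (hDd01 : ∀ y Y, Dd y Y ∈ Set.Icc (0 : ℝ) 1)
    (hlin : ∀ (A : (Fin d → ℝ) ≃ₗ[ℝ] (Fin d → ℝ)) (y : Fin d → ℝ)
      (Y : Fin n → (Fin d → ℝ)), Dd (A y) (fun i => A (Y i)) = Dd y Y)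
    (GD : (J → (Fin d → ℝ)) → (Fin n → J → (Fin d → ℝ)) → ℝ)
    (hGD : ∀ z x, GD z x = sInf {v : ℝ | ∃ t ∈ T, v = Dd (z t) (fun i => x i t)})
    (a : J → (Fin d → ℝ)) (ha : ∀ t ∈ T, ∀ j, a t j ≠ 0)
    (z : J → (Fin d → ℝ)) (x : Fin n → J → (Fin d → ℝ)) :
    GD (fun t j => a t j * z t j) (fun i t j => a t j * x i t j) = GD z x := by
  have key : ∀ t ∈ T, Dd (fun j => a t j * z t j) (fun i j => a t j * x i t j)
      = Dd (z t) (fun i => x i t) := by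
    intro t ht
    exact hlin (LinearEquiv.piCongrRight
      (fun j => LinearEquiv.smulOfNeZero ℝ ℝ (a t j) (ha t ht j))) (z t) (fun i => x i t)
  rw [hGD, hGD]
  congr 1
  ext v
  constructor
  · rintro ⟨t, ht, rfl⟩
    exact ⟨t, ht, key t ht⟩
  · rintro ⟨t, ht, rfl⟩
    exact ⟨t, ht, (key t ht).symm⟩
end

section
/- (Proposition 4, postulate FD2F for the location-slope depth.) Suppose D² is linear invariant: D²(A y | A x¹, …, A xⁿ) = D²(y | x¹, …, xⁿ) for every invertible linear map A : ℝ² → ℝ² and every cloud in ℝ². Let a : ℝ → ℝ be differentiable with a(t) ≠ 0 for all t ∈ T, and for functions u let a·u denote the pointwise product, (a·u)(t) = a(t)u(t), whose derivative is (a·u)'(t) = a'(t)u(t) + a(t)u'(t). Then LSD(a·z | a·x¹, …, a·xⁿ) = LSD(z | x¹, …, xⁿ). -/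
/-- Proposition 4, postulate FD2F: the location-slope depth is function-scale
invariant whenever the underlying bivariate depth is linear invariant. -/
theorem location_slope_depth_FD2F
    {n : ℕ} (hn : 0 < n) (T : Set ℝ) (hT : T.Nonempty)
    (D2 : (ℝ × ℝ) → (Fin n → ℝ × ℝ) → ℝ)
    (hD201 : ∀ y Y, D2 y Y ∈ Set.Icc (0 : ℝ) 1)
    (hlin : ∀ (A : (ℝ × ℝ) ≃ₗ[ℝ] (ℝ × ℝ)) (y : ℝ × ℝ) (Y : Fin n → ℝ × ℝ),
      D2 (A y) (fun i => A (Y i)) = D2 y Y)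
    (LSD : (ℝ → ℝ) → (Fin n → ℝ → ℝ) → ℝ)
    (hLSD : ∀ z x, LSD z x = sInf {v : ℝ | ∃ t ∈ T,
      v = D2 (z t, deriv z t) (fun i => (x i t, deriv (x i) t))})
    (z : ℝ → ℝ) (hz : Differentiable ℝ z)
    (x : Fin n → ℝ → ℝ) (hx : ∀ i, Differentiable ℝ (x i))
    (a : ℝ → ℝ) (ha : Differentiable ℝ a) (ha0 : ∀ t ∈ T, a t ≠ 0) :
    LSD (fun t => a t * z t) (fun i t => a t * x i t) = LSD z x := by
  have key : ∀ t ∈ T, D2 (a t * z t, deriv (fun t => a t * z t) t)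
      (fun i => (a t * x i t, deriv (fun t => a t * x i t) t))
      = D2 (z t, deriv z t) (fun i => (x i t, deriv (x i) t)) := by
    intro t ht
    have h0 := ha0 t ht
    have hd : ∀ u : ℝ → ℝ, Differentiable ℝ u →
        deriv (fun t => a t * u t) t = deriv a t * u t + a t * deriv u t := by
      intro u hu
      exact ((ha t).hasDerivAt.mul (hu t).hasDerivAt).deriv
    let A : (ℝ × ℝ) ≃ₗ[ℝ] (ℝ × ℝ) :=
      { toFun := fun p => (a t * p.1, deriv a t * p.1 + a t * p.2)
        invFun := fun p => (p.1 / a t, (p.2 - deriv a t * (p.1 / a t)) / a t)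
        map_add' := by
          intro p q
          ext
          · simp only [Prod.fst_add]; ring
          · simp only [Prod.fst_add, Prod.snd_add]; ring
        map_smul' := by
          intro c p
          ext
          · simp only [Prod.smul_fst, smul_eq_mul, RingHom.id_apply]; ring
          · simp only [Prod.smul_fst, Prod.smul_snd, smul_eq_mul, RingHom.id_apply]; ring
        left_inv := by
          intro p
          ext
          · dsimp only; field_simp
          · dsimp only; field_simp; ring
        right_inv := by
          intro p
          ext
          · dsimp only; field_simp
          · dsimp only; field_simp; ring }
    have h := hlin A (z t, deriv z t) (fun i => (x i t, deriv (x i) t))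
    rw [← h, hd z hz]
    have hx' : (fun i => (a t * x i t, deriv (fun t => a t * x i t) t))
        = fun i => A (x i t, deriv (x i) t) := by
      funext i
      rw [hd (x i) (hx i)]
      rfl
    rw [hx']
    rfl
  rw [hLSD, hLSD]
  congr 1
  ext v
  constructor
  · rintro ⟨t, ht, rfl⟩
    exact ⟨t, ht, key t ht⟩
  · rintro ⟨t, ht, rfl⟩
    exact ⟨t, ht, (key t ht).symm⟩
end

section
/- (Proposition 4, postulate FD2R for the location-slope depth.) Suppose D² is linear invariant: D²(A y | A x¹, …, A xⁿ) = D²(y | x¹, …, xⁿ) for every invertible linear map A : ℝ² → ℝ² and every cloud in ℝ². Let ρ : ℝ → ℝ be differentiable with ρ'(t) ≠ 0 for all t ∈ T, and suppose ρ maps T bijectively onto T. Then the location-slope depth is rearrangement invariant: LSD(z ∘ ρ | x¹ ∘ ρ, …, xⁿ ∘ ρ) = LSD(z | x¹, …, xⁿ), where (u ∘ ρ)'(t) = u'(ρ(t))ρ'(t) by the chain rule. -/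
/-- Proposition 4, postulate FD2R: the location-slope depth is rearrangement
invariant under differentiable bijective rearrangements with nonvanishing
derivative, whenever the underlying bivariate depth is linear invariant. -/
theorem location_slope_depth_FD2R
    {n : ℕ} (hn : 0 < n) (T : Set ℝ) (hT : T.Nonempty)
    (D2 : (ℝ × ℝ) → (Fin n → ℝ × ℝ) → ℝ)
    (hD201 : ∀ y Y, D2 y Y ∈ Set.Icc (0 : ℝ) 1)
    (hlin : ∀ (A : (ℝ × ℝ) ≃ₗ[ℝ] (ℝ × ℝ)) (y : ℝ × ℝ) (Y : Fin n → ℝ × ℝ),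
      D2 (A y) (fun i => A (Y i)) = D2 y Y)
    (LSD : (ℝ → ℝ) → (Fin n → ℝ → ℝ) → ℝ)
    (hLSD : ∀ z x, LSD z x = sInf {v : ℝ | ∃ t ∈ T,
      v = D2 (z t, deriv z t) (fun i => (x i t, deriv (x i) t))})
    (z : ℝ → ℝ) (hz : Differentiable ℝ z)
    (x : Fin n → ℝ → ℝ) (hx : ∀ i, Differentiable ℝ (x i))
    (ρ : ℝ → ℝ) (hρ : Differentiable ℝ ρ)
    (hρ' : ∀ t ∈ T, deriv ρ t ≠ 0) (hρT : Set.BijOn ρ T T) :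
    LSD (z ∘ ρ) (fun i => x i ∘ ρ) = LSD z x := by
  have key : ∀ t ∈ T, D2 ((z ∘ ρ) t, deriv (z ∘ ρ) t)
      (fun i => ((x i ∘ ρ) t, deriv (x i ∘ ρ) t)) =
      D2 (z (ρ t), deriv z (ρ t)) (fun i => (x i (ρ t), deriv (x i) (ρ t))) := by
    intro t ht
    have hd : ∀ u : ℝ → ℝ, Differentiable ℝ u →
        deriv (u ∘ ρ) t = deriv ρ t * deriv u (ρ t) := by
      intro u hu
      rw [deriv_comp t (hu _) (hρ _), mul_comm]
    rw [← hlin ((LinearEquiv.refl ℝ ℝ).prodCongr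
      (LinearEquiv.smulOfNeZero ℝ ℝ (deriv ρ t) (hρ' t ht))) (z (ρ t), deriv z (ρ t))]
    simp [hd z hz, fun i => hd (x i) (hx i)]
  rw [hLSD, hLSD]
  congr 1
  ext v
  constructor
  · rintro ⟨t, ht, rfl⟩
    exact ⟨ρ t, hρT.mapsTo ht, key t ht⟩
  · rintro ⟨s, hs, rfl⟩
    obtain ⟨t, ht, rfl⟩ := hρT.surjOn hs
    exact ⟨t, ht, (key t ht).symm⟩
end

section
/- (Proposition 6 for the principal component depth.) Suppose D¹ is translation invariant (D¹(ζ + c | ξ_1 + c, …, ξ_n + c) = D¹(ζ | ξ)), scale invariant (D¹(cζ | cξ_1, …, cξ_n) = D¹(ζ | ξ) for c ≠ 0), and upper semicontinuous (its upper level sets at levels α > 0 are closed in ℝ). Then: (a) PCD(λ z | λ x¹, …, λ xⁿ) = PCD(z | x¹, …, xⁿ) for every λ > 0 (FD2); (b) PCD(z + b | x¹ + b, …, xⁿ + b) = PCD(z | x¹, …, xⁿ) for every b in the linear span of {y_1, …, y_m} (restricted FD1); and (c) for every α > 0 the set {z ∈ E : PCD(z | x¹, …, xⁿ) ≥ α}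 is closed in E (FD5). -/
/-- Proposition 6: the principal component depth is scale invariant, translation
invariant for shifts in the span of the principal components, and upper
semicontinuous, whenever the underlying univariate depth is translation
invariant, scale invariant and upper semicontinuous. -/
theorem principal_component_depth_props
    {E : Type*} [NormedAddCommGroup E] [InnerProductSpace ℝ E]
    {n m : ℕ} (hn : 0 < n) (hm : 0 < m)
    (y : Fin m → E) (hy : Orthonormal ℝ y)
    (D1 : ℝ → (Fin n → ℝ) → ℝ)
    (hD101 : ∀ ζ ξ, D1 ζ ξ ∈ Set.Icc (0 : ℝ) 1)
    (htrans : ∀ (c ζ : ℝ) (ξ : Fin n → ℝ), D1 (ζ + c) (fun i => ξ i + c) = D1 ζ ξ)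
    (hscale : ∀ c : ℝ, c ≠ 0 → ∀ (ζ : ℝ) (ξ : Fin n → ℝ),
      D1 (c * ζ) (fun i => c * ξ i) = D1 ζ ξ)
    (husc : ∀ (ξ : Fin n → ℝ) (α : ℝ), 0 < α → IsClosed {ζ : ℝ | α ≤ D1 ζ ξ})
    (PCD : E → (Fin n → E) → ℝ)
    (hPCD : ∀ z x, PCD z x = sInf {v : ℝ | ∃ r : Fin m → ℝ, (∑ j, r j ^ 2) = 1 ∧
      v = D1 (∑ j, r j * (inner ℝ z (y j) : ℝ))
        (fun i => ∑ j, r j * (inner ℝ (x i) (y j) : ℝ))})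
    (x : Fin n → E) :
    (∀ (z : E) (l : ℝ), 0 < l → PCD (l • z) (fun i => l • x i) = PCD z x) ∧
      (∀ (z : E), ∀ b ∈ Submodule.span ℝ (Set.range y),
        PCD (z + b) (fun i => x i + b) = PCD z x) ∧
      (∀ α : ℝ, 0 < α → IsClosed {z : E | α ≤ PCD z x}) := by
  refine ⟨?_, ?_, ?_⟩
  · intro z l hl
    rw [hPCD, hPCD]
    have key : ∀ (r : Fin m → ℝ) (w : E),
        ∑ j, r j * (inner ℝ (l • w) (y j) : ℝ) = l * ∑ j, r j * (inner ℝ w (y j) : ℝ) := by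
      intro r w
      rw [Finset.mul_sum]
      refine Finset.sum_congr rfl fun j _ => ?_
      rw [real_inner_smul_left]
      ring
    simp only [key, hscale l hl.ne']
  · intro z b _
    rw [hPCD, hPCD]
    have key : ∀ (r : Fin m → ℝ) (w : E),
        ∑ j, r j * (inner ℝ (w + b) (y j) : ℝ)
          = ∑ j, r j * (inner ℝ w (y j) : ℝ) + ∑ j, r j * (inner ℝ b (y j) : ℝ) := by
      intro r w
      rw [← Finset.sum_add_distrib]
      refine Finset.sum_congr rfl fun j _ => ?_
      rw [inner_add_left]
      ring
    simp only [key, htrans]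
  · intro α hα
    have key : {z : E | α ≤ PCD z x} = ⋂ (r : Fin m → ℝ) (_ : (∑ j, r j ^ 2) = 1),
        (fun z : E => ∑ j, r j * (inner ℝ z (y j) : ℝ)) ⁻¹'
          {ζ : ℝ | α ≤ D1 ζ (fun i => ∑ j, r j * (inner ℝ (x i) (y j) : ℝ))} := by
      ext z
      simp only [Set.mem_setOf_eq, Set.mem_iInter, Set.mem_preimage]
      rw [hPCD, le_csInf_iff]
      · constructor
        · intro h r hr
          exact h _ ⟨r, hr, rfl⟩
        · rintro h v ⟨r, hr, rfl⟩
          exact h r hr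
      · refine ⟨0, ?_⟩
        rintro v ⟨r, hr, rfl⟩
        exact (hD101 _ _).1
      · refine ⟨_, Pi.single (⟨0, hm⟩ : Fin m) 1, ?_, rfl⟩
        rw [Finset.sum_eq_single (⟨0, hm⟩ : Fin m)]
        · simp
        · intro j _ hj
          simp [Pi.single_eq_of_ne hj]
        · simp
    rw [key]
    refine isClosed_iInter fun r => isClosed_iInter fun _ => (husc _ α hα).preimage ?_
    fun_prop
end

section
/- (Tukey functional depth vanishes outside the convex hull of the data.) Let E be a real normed vector space, x¹, …, xⁿ ∈ E, and let z ∈ E not lie in the convex hull of {x¹, …, xⁿ}. Then TD(z | x¹, …, xⁿ) = 0, where TD is the Tukey functional depth obtained by taking the infimum of the univariate halfspace depths over all continuous linear functionals. (The proof uses that the convex hull of finitely many points is compact, so z can be strictly separated from it by a continuous linear functional, whose corresponding univariate halfspace depth of φ(z) is 0.) -/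
/-- The univariate halfspace (Tukey) depth of ζ with respect to ξ₁, …, ξₙ. -/
noncomputable def tukeyDepth1 {n : ℕ} (ζ : ℝ) (ξ : Fin n → ℝ) : ℝ :=
  (min ((Finset.univ.filter fun i => ξ i ≤ ζ).card)
      ((Finset.univ.filter fun i => ζ ≤ ξ i).card) : ℝ) / n

/-- The Tukey functional depth vanishes outside the convex hull of the data. -/
theorem tukey_functional_depth_vanishes
    {E : Type*} [NormedAddCommGroup E] [NormedSpace ℝ E]
    {n : ℕ} (hn : 0 < n) (x : Fin n → E) (z : E)
    (hz : z ∉ convexHull ℝ (Set.range x)) :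
    sInf {v : ℝ | ∃ φ : E →L[ℝ] ℝ, v = tukeyDepth1 (φ z) (fun i => φ (x i))} = 0 := by
  have hnn : ∀ v ∈ {v : ℝ | ∃ φ : E →L[ℝ] ℝ, v = tukeyDepth1 (φ z) (fun i => φ (x i))},
      0 ≤ v := by
    rintro v ⟨φ, rfl⟩
    unfold tukeyDepth1
    positivity
  obtain ⟨f, u, h1, h2⟩ := geometric_hahn_banach_point_closed (convex_convexHull ℝ (Set.range x))
    ((Set.finite_range x).isClosed_convexHull ℝ) hz
  refine le_antisymm (csInf_le ⟨0, hnn⟩ ⟨f, ?_⟩) (Real.sInf_nonneg hnn)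
  have h3 : (Finset.univ.filter fun i => f (x i) ≤ f z) = ∅ := by
    apply Finset.filter_eq_empty_iff.2
    intro i _
    have := h2 (x i) (subset_convexHull ℝ _ ⟨i, rfl⟩)
    linarith
  simp [tukeyDepth1, h3]
end
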